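/- arXiv:2306.10427 — 7 statements merged into one kernel-verified Lean document; each statement's English description precedes it below -/
import Mathlib

section
/- Every embeddable finite simple graph contains no cycle of length 4 (it is square-free). In particular, if a graph G contains two distinct vertices u, v that have two distinct common neighbors a, b, then G is not embeddable. -/
open Matrix

/-- A 010-coloring of a graph: no two adjacent vertices are both 0,
and no triangle has all three vertices 1. -/
def Is010Coloring {V : Type*} (G : SimpleGraph V) (c : V → Fin 2) : Prop :=
  (∀ u v : V, G.Adj u v → ¬(c u = 0 ∧ c v = 0)) ∧
  (∀ u v w : V, G.Adj u v → G.Adj v w → G.Adj u w →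
    ¬(c u = 1 ∧ c v = 1 ∧ c w = 1))

/-- A graph is 010-colorable if it admits a 010-coloring. -/
def Is010Colorable {V : Type*} (G : SimpleGraph V) : Prop :=
  ∃ c : V → Fin 2, Is010Coloring G c

/-- An embedding of a graph into ℝ³: adjacent vertices map to orthogonal
vectors, and distinct vertices map to non-collinear vectors. -/
def IsEmbedding {V : Type*} (G : SimpleGraph V) (p : V → Fin 3 → ℝ) : Prop :=
  (∀ u v : V, G.Adj u v → p u ⬝ᵥ p v = 0) ∧
  (∀ u v : V, u ≠ v → crossProduct (p u) (p v) ≠ 0)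

/-- A graph is embeddable if it admits an embedding into ℝ³. -/
def Embeddable {V : Type*} (G : SimpleGraph V) : Prop :=
  ∃ p : V → Fin 3 → ℝ, IsEmbedding G p

/-!
Two distinct vertices `u`, `v` of an embedded graph are sent to non-collinear vectors, so the
vectors orthogonal to both form the line spanned by `p u ⨯₃ p v`. All common neighbors of `u` and
`v` are sent to this line, so two distinct ones would be sent to collinear vectors.
-/

section CrossProduct

variable {R : Type*} [CommRing R] {u v w a b : Fin 3 → R}

theorem dotProduct_smul_eq_of_cross_eq_zero (h : w ⨯₃ a = 0) (x : Fin 3 → R) :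
    (w ⬝ᵥ x) • a = (a ⬝ᵥ x) • w := by
  rw [← sub_eq_zero, ← cross_cross_eq_smul_sub_smul, h, map_zero, LinearMap.zero_apply]

theorem cross_cross_eq_zero_of_dotProduct_eq_zero (hu : u ⬝ᵥ a = 0) (hv : v ⬝ᵥ a = 0) :
    u ⨯₃ v ⨯₃ a = 0 := by
  rw [cross_cross_eq_smul_sub_smul, hu, hv, zero_smul, zero_smul, sub_zero]

variable [NoZeroDivisors R]

theorem cross_eq_zero_of_cross_eq_zero (hw : w ≠ 0) (ha : w ⨯₃ a = 0) (hb : w ⨯₃ b = 0) :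
    a ⨯₃ b = 0 := by
  obtain ⟨x, hx⟩ : ∃ x, w ⬝ᵥ x ≠ 0 := by
    contrapose! hw
    exact dotProduct_eq_zero w hw
  have h_smul : (w ⬝ᵥ x) • (a ⨯₃ b) = 0 := calc
    (w ⬝ᵥ x) • (a ⨯₃ b) = ((w ⬝ᵥ x) • a) ⨯₃ b := by rw [map_smul, LinearMap.smul_apply]
    _ = ((a ⬝ᵥ x) • w) ⨯₃ b := by rw [dotProduct_smul_eq_of_cross_eq_zero ha]
    _ = 0 := by rw [map_smul, LinearMap.smul_apply, hb, smul_zero]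
  exact (smul_eq_zero.mp h_smul).resolve_left hx

theorem cross_eq_zero_of_dotProduct_eq_zero (huv : u ⨯₃ v ≠ 0)
    (hua : u ⬝ᵥ a = 0) (hub : u ⬝ᵥ b = 0) (hva : v ⬝ᵥ a = 0) (hvb : v ⬝ᵥ b = 0) :
    a ⨯₃ b = 0 :=
  cross_eq_zero_of_cross_eq_zero huv
    (cross_cross_eq_zero_of_dotProduct_eq_zero hua hva)
    (cross_cross_eq_zero_of_dotProduct_eq_zero hub hvb)

end CrossProduct

theorem embeddable_square_free_general {V : Type*} {G : SimpleGraph V} (hG : Embeddable G)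
    {u v : V} (huv : u ≠ v) : (G.commonNeighbors u v).Subsingleton := by
  obtain ⟨p, h_orthogonal, h_noncollinear⟩ := hG
  rintro a ⟨hua, hva⟩ b ⟨hub, hvb⟩
  by_contra hab
  exact h_noncollinear a b hab <|
    cross_eq_zero_of_dotProduct_eq_zero (h_noncollinear u v huv)
      (h_orthogonal u a hua) (h_orthogonal u b hub)
      (h_orthogonal v a hva) (h_orthogonal v b hvb)

/-- Every embeddable graph is square-free: if `G` contains two distinct
vertices `u`, `v` with two distinct common neighbors `a`, `b` (i.e. a cycle
of length 4), then `G` is not embeddable. -/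
theorem embeddable_square_free {V : Type*} [Fintype V] (G : SimpleGraph V)
    (u v a b : V) (huv : u ≠ v) (hab : a ≠ b)
    (hua : G.Adj u a) (hub : G.Adj u b) (hva : G.Adj v a) (hvb : G.Adj v b) :
    ¬ Embeddable G :=
  fun hG => hab (embeddable_square_free_general hG huv ⟨hua, hva⟩ ⟨hub, hvb⟩)
end

section
/- Let G be a finite simple graph and v a vertex of G of degree at most 2. If the graph G − v obtained by deleting v is 010-colorable, then G is 010-colorable. -/
open Matrix

/-!
A coloring of `G - v` extends to `v`: if every neighbour of `v` is colored 1, color `v` with 0.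
Otherwise color `v` with 1: one of the at most two neighbours is colored 0, and it lies on every
triangle through `v`.
-/

theorem eq_or_eq_of_adj_of_degree_le_two {V : Type*} {G : SimpleGraph V} {v a b z : V}
    [Fintype (G.neighborSet v)] (hdeg : G.degree v ≤ 2) (ha : G.Adj v a) (hb : G.Adj v b)
    (hz : G.Adj v z) (hab : a ≠ b) : z = a ∨ z = b := by
  by_contra! hne
  refine hdeg.not_gt (Finset.two_lt_card.2 ⟨a, ?_, b, ?_, z, ?_, hab, hne.1.symm, hne.2.symm⟩) <;>
    simpa only [SimpleGraph.mem_neighborFinset]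

namespace Is010Coloring

variable {V : Type*} {G : SimpleGraph V} {v : V} {c : V → Fin 2}

theorem of_induce_ne (hc : Is010Coloring (G.induce {u | u ≠ v}) (c ∘ (↑)))
    (hedge : ∀ a, G.Adj v a → ¬(c v = 0 ∧ c a = 0))
    (htriangle : ∀ a b, G.Adj v a → G.Adj v b → G.Adj a b → ¬(c v = 1 ∧ c a = 1 ∧ c b = 1)) :
    Is010Coloring G c := by
  refine ⟨fun x y hxy ↦ ?_, fun x y z hxy hyz hxz ↦ ?_⟩
  · rcases eq_or_ne x v with rfl | hx
    · exact hedge y hxy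
    rcases eq_or_ne y v with rfl | hy
    · exact fun h ↦ hedge x hxy.symm h.symm
    exact hc.1 ⟨x, hx⟩ ⟨y, hy⟩ hxy
  · rcases eq_or_ne x v with rfl | hx
    · exact htriangle y z hxy hxz hyz
    rcases eq_or_ne y v with rfl | hy
    · exact fun ⟨h₁, h₂, h₃⟩ ↦ htriangle x z hxy.symm hyz hxz ⟨h₂, h₁, h₃⟩
    rcases eq_or_ne z v with rfl | hz
    · exact fun ⟨h₁, h₂, h₃⟩ ↦ htriangle x y hxz.symm hyz.symm hxy ⟨h₃, h₁, h₂⟩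
    exact hc.2 ⟨x, hx⟩ ⟨y, hy⟩ ⟨z, hz⟩ hxy hyz hxz

variable [DecidableEq V]

theorem update (hc : Is010Coloring (G.induce {u | u ≠ v}) (c ∘ (↑))) {i : Fin 2}
    (hedge : ∀ a, G.Adj v a → ¬(i = 0 ∧ c a = 0))
    (htriangle : ∀ a b, G.Adj v a → G.Adj v b → G.Adj a b → ¬(i = 1 ∧ c a = 1 ∧ c b = 1)) :
    Is010Coloring G (Function.update c v i) := by
  refine of_induce_ne (v := v) ?_ (fun a ha ↦ ?_) fun a b ha hb hab ↦ ?_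
  · rwa [Function.update_comp_eq_of_forall_ne _ _ Subtype.prop]
  · simpa only [Function.update_self, Function.update_of_ne ha.ne'] using hedge a ha
  · simpa only [Function.update_self, Function.update_of_ne ha.ne', Function.update_of_ne hb.ne']
      using htriangle a b ha hb hab

theorem update_zero (hc : Is010Coloring (G.induce {u | u ≠ v}) (c ∘ (↑)))
    (hneighbor : ∀ a, G.Adj v a → c a = 1) : Is010Coloring G (Function.update c v 0) :=
  hc.update (fun a ha h ↦ by simp [hneighbor a ha] at h) (fun _ _ _ _ _ h ↦ by simp at h)

theorem update_one (hc : Is010Coloring (G.induce {u | u ≠ v}) (c ∘ (↑)))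
    (hneighbor : ∀ a b, G.Adj v a → G.Adj v b → G.Adj a b → ¬(c a = 1 ∧ c b = 1)) :
    Is010Coloring G (Function.update c v 1) :=
  hc.update (fun _ _ h ↦ by simp at h) (fun a b ha hb hab h ↦ hneighbor a b ha hb hab h.2)

theorem exists_update_of_degree_le_two [Fintype (G.neighborSet v)] (hdeg : G.degree v ≤ 2)
    (hc : Is010Coloring (G.induce {u | u ≠ v}) (c ∘ (↑))) :
    ∃ i, Is010Coloring G (Function.update c v i) := by
  by_cases hone : ∀ a, G.Adj v a → c a = 1
  · exact ⟨0, hc.update_zero hone⟩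
  · push Not at hone
    obtain ⟨z, hz, hcz⟩ := hone
    refine ⟨1, hc.update_one fun a b ha hb hab ⟨hca, hcb⟩ ↦ ?_⟩
    rcases eq_or_eq_of_adj_of_degree_le_two hdeg ha hb hz hab.ne with rfl | rfl
    exacts [hcz hca, hcz hcb]

end Is010Coloring

theorem colorable010_of_delete_low_degree_vertex_general {V : Type*} (G : SimpleGraph V) (v : V)
    [Fintype (G.neighborSet v)] (hdeg : G.degree v ≤ 2)
    (hcol : Is010Colorable (G.induce {u : V | u ≠ v})) :
    Is010Colorable G := by
  classical
  obtain ⟨c, hc⟩ := hcol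
  obtain ⟨d, rfl⟩ : ∃ d : V → Fin 2, d ∘ (↑) = c :=
    ⟨Function.extend (↑) c 0, Function.extend_comp Subtype.val_injective c 0⟩
  obtain ⟨i, hi⟩ := hc.exists_update_of_degree_le_two hdeg
  exact ⟨_, hi⟩

/-- If a vertex `v` of a finite graph `G` has degree at most 2 and the graph
`G - v` obtained by deleting `v` is 010-colorable, then `G` is 010-colorable. -/
theorem colorable010_of_delete_low_degree_vertex {V : Type*} [Fintype V]
    [DecidableEq V] (G : SimpleGraph V) [DecidableRel G.Adj] (v : V)
    (hdeg : G.degree v ≤ 2)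
    (hcol : Is010Colorable (G.induce {u : V | u ≠ v})) :
    Is010Colorable G :=
  colorable010_of_delete_low_degree_vertex_general G v hdeg hcol
end

section
/- Every Kochen-Specker graph of minimum order has minimum degree at least 3; that is, if G is a KS graph such that no KS graph has fewer vertices than G, then every vertex of G has degree at least 3. -/
open Matrix

/-- A Kochen-Specker graph: embeddable and not 010-colorable. -/
def IsKSGraph {V : Type*} (G : SimpleGraph V) : Prop :=
  Embeddable G ∧ ¬ Is010Colorable G

/-! A 010-coloring is the same thing as an independent set of vertices (those colored 0) that
meets every triangle. Suppose `v` has degree less than 3 and `S` is such a set for `G - v`. If `v`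
has no neighbor in `S`, then `S ∪ {v}` is such a set for `G`. If `v` has a neighbor `x ∈ S`, then
`S` itself works: a triangle through `v` avoiding `S` would give `v` two neighbors besides `x`.
Hence deleting a vertex of degree less than 3 from a KS graph leaves a KS graph, contradicting
minimality. -/

section Clique

variable {V : Type*} {G : SimpleGraph V} {n : ℕ} {v : V}

theorem le_degree_of_isNClique_of_adj [Fintype (G.neighborSet v)] {t : Finset V} {x : V}
    (ht : G.IsNClique n t) (hvt : v ∈ t) (hvx : G.Adj v x) (hxt : x ∉ t) : n ≤ G.degree v := by
  classical
  have hsub : insert x (t.erase v) ⊆ G.neighborFinset v := by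
    intro y hy
    rw [SimpleGraph.mem_neighborFinset]
    obtain rfl | hy := Finset.mem_insert.mp hy
    · exact hvx
    · obtain ⟨hyv, hyt⟩ := Finset.mem_erase.mp hy
      exact ht.isClique hvt hyt hyv.symm
  calc
    n = t.card := ht.card_eq.symm
    _ = (insert x (t.erase v)).card := by
      rw [Finset.card_insert_of_notMem (mt Finset.mem_of_mem_erase hxt),
        Finset.card_erase_add_one hvt]
    _ ≤ G.degree v := Finset.card_le_card hsub

theorem exists_isIndepSet_cliqueFreeOn_compl_of_degree_lt [Fintype (G.neighborSet v)] {S : Set V}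
    (hS : G.IsIndepSet S) (hfree : G.CliqueFreeOn ({v}ᶜ \ S) n) (hv : G.degree v < n) :
    ∃ T, G.IsIndepSet T ∧ G.CliqueFreeOn Tᶜ n := by
  by_cases hx : ∃ x ∈ S, G.Adj v x
  · obtain ⟨x, hxS, hvx⟩ := hx
    refine ⟨S, hS, fun t htS ht => ?_⟩
    have hvt : v ∉ t := fun hvt =>
      hv.not_ge (le_degree_of_isNClique_of_adj ht hvt hvx fun hxt => htS hxt hxS)
    have htv : (t : Set V) ⊆ {v}ᶜ := Set.subset_compl_singleton_iff.mpr hvt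
    exact hfree (Set.subset_inter htv htS) ht
  · push Not at hx
    refine ⟨insert v S, hS.insert fun x hxS _ => ⟨hx x hxS, fun h => hx x hxS h.symm⟩, ?_⟩
    rwa [← Set.singleton_union, Set.compl_union, ← Set.sdiff_eq]

theorem isIndepSet_induce_iff {s : Set V} {T : Set s} :
    (G.induce s).IsIndepSet T ↔ G.IsIndepSet (Subtype.val '' T) :=
  (Subtype.val_injective.injOn.pairwise_image (r := fun u w => ¬ G.Adj u w)).symm

theorem cliqueFreeOn_induce_iff {s : Set V} {T : Set s} :
    (G.induce s).CliqueFreeOn T n ↔ G.CliqueFreeOn (Subtype.val '' T) n := by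
  classical
  constructor
  · intro h t htT ht
    obtain ⟨u, huT, rfl⟩ := Finset.subset_set_image_iff.mp htT
    refine h huT ((SimpleGraph.isNClique_induce_iff s u n).mpr ?_)
    rwa [Finset.map_eq_image]
  · intro h t htT ht
    rw [SimpleGraph.isNClique_induce_iff] at ht
    refine h ?_ ht
    rw [Finset.coe_map]
    exact Set.image_mono htT

end Clique

section Coloring

variable {V : Type*} {G : SimpleGraph V} {v : V}

theorem is010Coloring_iff_isIndepSet_and_cliqueFreeOn {c : V → Fin 2} :
    Is010Coloring G c ↔ G.IsIndepSet (c ⁻¹' {0}) ∧ G.CliqueFreeOn (c ⁻¹' {0})ᶜ 3 := by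
  classical
  refine and_congr ⟨fun h u hu w hw _ huw => h u w huw ⟨hu, hw⟩,
    fun h u w huw ⟨hu, hw⟩ => h hu hw huw.ne huw⟩ ?_
  constructor
  · intro h t htc ht
    obtain ⟨a, b, d, hab, had, hbd, rfl⟩ := SimpleGraph.is3Clique_iff.mp ht
    have hone : ∀ x ∈ ({a, b, d} : Finset V), c x = 1 := fun x hx =>
      Fin.eq_one_of_ne_zero _ (htc hx)
    exact h a b d hab hbd had ⟨hone a (by simp), hone b (by simp), hone d (by simp)⟩
  · rintro h a b d hab hbd had ⟨ha, hb, hd⟩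
    refine h (t := {a, b, d}) ?_ (SimpleGraph.is3Clique_triple_iff.mpr ⟨hab, had, hbd⟩)
    simp [Set.insert_subset_iff, ha, hb, hd]

theorem is010Colorable_iff_exists_isIndepSet :
    Is010Colorable G ↔ ∃ S, G.IsIndepSet S ∧ G.CliqueFreeOn Sᶜ 3 := by
  classical
  simp only [Is010Colorable, is010Coloring_iff_isIndepSet_and_cliqueFreeOn]
  refine ⟨fun ⟨c, hc⟩ => ⟨c ⁻¹' {0}, hc⟩, fun ⟨S, hS⟩ => ⟨fun v => if v ∈ S then 0 else 1, ?_⟩⟩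
  have hzero : (fun v => if v ∈ S then 0 else 1 : V → Fin 2) ⁻¹' {0} = S := by
    ext
    simp
  rwa [hzero]

theorem is010Colorable_induce_iff {s : Set V} :
    Is010Colorable (G.induce s) ↔ ∃ S ⊆ s, G.IsIndepSet S ∧ G.CliqueFreeOn (s \ S) 3 := by
  rw [is010Colorable_iff_exists_isIndepSet, ← Subtype.exists_set_subtype]
  simp only [isIndepSet_induce_iff, cliqueFreeOn_induce_iff,
    Set.image_compl_eq_range_sdiff_image Subtype.val_injective, Subtype.range_coe]

theorem Is010Colorable.of_induce_compl_singleton [Fintype (G.neighborSet v)]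
    (hcol : Is010Colorable (G.induce {v}ᶜ)) (hv : G.degree v < 3) : Is010Colorable G := by
  obtain ⟨S, -, hS, hfree⟩ := is010Colorable_induce_iff.mp hcol
  exact is010Colorable_iff_exists_isIndepSet.mpr
    (exists_isIndepSet_cliqueFreeOn_compl_of_degree_lt hS hfree hv)

end Coloring

theorem Embeddable.of_isContained {V W : Type*} {G : SimpleGraph V} {H : SimpleGraph W}
    (hG : Embeddable G) (hHG : H.IsContained G) : Embeddable H := by
  obtain ⟨p, horth, hcross⟩ := hG
  obtain ⟨f⟩ := hHG
  exact ⟨p ∘ f, fun u v huv => horth _ _ (f.toHom.map_adj huv),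
    fun u v huv => hcross _ _ (f.injective.ne huv)⟩

theorem ks_min_order_min_degree_three_general {V : Type*} {G : SimpleGraph V} {v : V}
    [Fintype (G.neighborSet v)] (hKS : IsKSGraph G) (hcrit : ¬ IsKSGraph (G.induce {v}ᶜ)) :
    3 ≤ G.degree v := by
  obtain ⟨hemb, hncol⟩ := hKS
  have hemb_del : Embeddable (G.induce {v}ᶜ) :=
    hemb.of_isContained (SimpleGraph.Embedding.induce _).isContained
  have hcol : Is010Colorable (G.induce {v}ᶜ) := by_contra fun h => hcrit ⟨hemb_del, h⟩
  exact not_lt.mp fun hv => hncol (hcol.of_induce_compl_singleton hv)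

/-- Every Kochen-Specker graph of minimum order has minimum degree at least 3. -/
theorem ks_min_order_min_degree_three {V : Type} [Fintype V]
    (G : SimpleGraph V) [DecidableRel G.Adj] (hKS : IsKSGraph G)
    (hmin : ∀ (W : Type) [Fintype W] (H : SimpleGraph W),
      IsKSGraph H → Fintype.card V ≤ Fintype.card W) :
    ∀ v : V, 3 ≤ G.degree v := by
  classical
  exact fun v => ks_min_order_min_degree_three_general hKS fun hdel =>
    (hmin _ _ hdel).not_gt (Fintype.card_subtype_lt (x := v) (by simp))
end

section
/- Every Kochen-Specker graph of minimum order is properly 4-colorable; that is, if G is a KS graph such that no KS graph has fewer vertices than G, then there is a map c : V(G) → {1,2,3,4} with c(u) ≠ c(v) for every edge uv of G. -/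
open Matrix

/-!
Already the orthogonality graph of all nonzero vectors of `ℝ³` is properly 4-colorable, and an
embedding is a homomorphism into it. The four color classes are octants taken up to a global sign,
each with enough of its boundary removed that no two of its points are orthogonal: with the
indices `k, k + 1, k + 2` read cyclically, they are
`x k > 0, x (k + 1) ≥ 0, x (k + 2) ≤ 0` for `k = 0, 1, 2`, and `x 0 > 0, x 1 ≥ 0, x 2 ≥ 0`.
If a nonzero `x` were in none of them, every nonzero entry would be followed cyclically by one of
the opposite sign, which is impossible on a cycle of odd length.
-/

section CyclicIndices

theorem fin_three_eq_or_eq_add_one_or_eq_add_two :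
    ∀ k i : Fin 3, i = k ∨ i = k + 1 ∨ i = k + 2 := by
  decide

theorem fin_three_add_one_add_one : ∀ k : Fin 3, k + 1 + 1 = k + 2 := by
  decide

theorem fin_three_add_two_add_one : ∀ k : Fin 3, k + 2 + 1 = k := by
  decide

theorem fin_three_add_two_add_two : ∀ k : Fin 3, k + 2 + 2 = k + 1 := by
  decide

end CyclicIndices

section DoubleOrthant

variable {ι R : Type*} [CommRing R] [LinearOrder R]

/-- The closed orthant with sign pattern `s` together with its opposite, with the hyperplane
`x k = 0` removed. The signs are relative to that of `x k`, which makes the condition invariant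
under `x ↦ -x`; the set is empty when `s k = -1`. -/
def doubleOrthant (s : ι → ℤˣ) (k : ι) : Set (ι → R) :=
  {x | x k ≠ 0 ∧ ∀ i, 0 ≤ s i • (x k * x i)}

variable [IsStrictOrderedRing R]

theorem mem_doubleOrthant_one_of_forall_mul_pos {x : ι → R} {k : ι} (h : ∀ i, 0 < x k * x i)
    (j : ι) : x ∈ doubleOrthant 1 j := by
  refine ⟨right_ne_zero_of_mul (h j).ne', fun i => ?_⟩
  have hprod : 0 < x k * x k * (x j * x i) := mul_mul_mul_comm (x k) (x j) _ _ ▸ mul_pos (h j) (h i)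
  simpa using (pos_of_mul_pos_right hprod (mul_self_nonneg (x k))).le

theorem mul_mul_nonneg_of_mem_doubleOrthant {s : ι → ℤˣ} {k : ι} {x y : ι → R}
    (hx : x ∈ doubleOrthant s k) (hy : y ∈ doubleOrthant s k) (i : ι) :
    0 ≤ x k * y k * (x i * y i) :=
  calc
    0 ≤ (s i • (x k * x i)) * (s i • (y k * y i)) := mul_nonneg (hx.2 i) (hy.2 i)
    _ = x k * y k * (x i * y i) := by
      rw [smul_mul_smul_comm, Int.units_mul_self, one_smul, mul_mul_mul_comm]

theorem dotProduct_ne_zero_of_mem_doubleOrthant [Fintype ι] {s : ι → ℤˣ} {k : ι} {x y : ι → R}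
    (hx : x ∈ doubleOrthant s k) (hy : y ∈ doubleOrthant s k) : x ⬝ᵥ y ≠ 0 := by
  have hpos : 0 < x k * y k * (x ⬝ᵥ y) := by
    rw [dotProduct, Finset.mul_sum]
    exact Finset.sum_pos' (fun i _ => mul_mul_nonneg_of_mem_doubleOrthant hx hy i)
      ⟨k, Finset.mem_univ k, mul_self_pos.mpr (mul_ne_zero hx.1 hy.1)⟩
  exact right_ne_zero_of_mul hpos.ne'

end DoubleOrthant

section OrthogonalityGraph

variable (ι R : Type*) [Fintype ι] [CommRing R] [LinearOrder R] [IsStrictOrderedRing R]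

/-- The orthogonality graph of `ι → R`: nonzero vectors are adjacent when they are orthogonal.
The zero vector is kept as an isolated vertex, because an embedding of a one-vertex graph may
take the value zero. -/
def orthogonalityGraph : SimpleGraph (ι → R) where
  Adj x y := x ≠ 0 ∧ y ≠ 0 ∧ x ⬝ᵥ y = 0
  symm := ⟨fun x y ⟨hx, hy, hxy⟩ => ⟨hy, hx, dotProduct_comm y x ▸ hxy⟩⟩
  loopless := ⟨fun _ ⟨hx, _, hxx⟩ => hx (dotProduct_self_eq_zero.mp hxx)⟩

end OrthogonalityGraph

section Octants

variable {R : Type*} [CommRing R] [LinearOrder R] [IsStrictOrderedRing R]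

/-- The four color classes covering the nonzero vectors of `R³`. Up to a global sign, `some k`
stands for `x k > 0, x (k + 1) ≥ 0, x (k + 2) ≤ 0`, and `none` for `x 0 > 0, x 1 ≥ 0, x 2 ≥ 0`. -/
def octantClass : Option (Fin 3) → Set (Fin 3 → R)
  | some k => doubleOrthant (fun i => if i = k + 2 then -1 else 1) k
  | none => doubleOrthant 1 0

theorem mem_octantClass_some_of_mul_nonneg_of_mul_nonpos {x : Fin 3 → R} {k : Fin 3}
    (hk : x k ≠ 0) (hsucc : 0 ≤ x k * x (k + 1)) (hpred : x k * x (k + 2) ≤ 0) :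
    x ∈ octantClass (some k) := by
  refine ⟨hk, fun i => ?_⟩
  rcases fin_three_eq_or_eq_add_one_or_eq_add_two k i with rfl | rfl | rfl
  · simpa using mul_self_nonneg (x i)
  · simpa using hsucc
  · simpa using hpred

theorem exists_mul_succ_nonneg {x : Fin 3 → R} (hx : x ≠ 0) :
    ∃ k, x k ≠ 0 ∧ 0 ≤ x k * x (k + 1) := by
  obtain ⟨k, hk⟩ := Function.ne_iff.mp hx
  by_contra! hneg
  have h₀₁ : x k * x (k + 1) < 0 := hneg k hk
  have h₁₂ : x (k + 1) * x (k + 2) < 0 := by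
    simpa only [fin_three_add_one_add_one] using hneg (k + 1) (right_ne_zero_of_mul h₀₁.ne)
  have h₂₀ : x (k + 2) * x k < 0 := by
    simpa only [fin_three_add_two_add_one] using hneg (k + 2) (right_ne_zero_of_mul h₁₂.ne)
  have hprod : (x k * x (k + 1) * x (k + 2)) ^ 2 < 0 :=
    calc
      (x k * x (k + 1) * x (k + 2)) ^ 2
        = x k * x (k + 1) * (x (k + 1) * x (k + 2)) * (x (k + 2) * x k) := by ring
      _ < 0 := mul_neg_of_pos_of_neg (mul_pos_of_neg_of_neg h₀₁ h₁₂) h₂₀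
  exact (sq_nonneg _).not_gt hprod

theorem exists_mem_octantClass {x : Fin 3 → R} (hx : x ≠ 0) : ∃ j, x ∈ octantClass j := by
  obtain ⟨k, hk, hsucc⟩ := exists_mul_succ_nonneg hx
  obtain hpred | hpred := le_or_gt (x k * x (k + 2)) 0
  · exact ⟨some k, mem_octantClass_some_of_mul_nonneg_of_mul_nonpos hk hsucc hpred⟩
  have hlast : 0 < x (k + 2) * x k := mul_comm (x k) _ ▸ hpred
  have hlast_ne : x (k + 2) ≠ 0 := left_ne_zero_of_mul hlast.ne'
  obtain hmid | hmid := le_or_gt (x (k + 2) * x (k + 1)) 0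
  · refine ⟨some (k + 2), mem_octantClass_some_of_mul_nonneg_of_mul_nonpos hlast_ne ?_ ?_⟩
    · simpa only [fin_three_add_two_add_one] using hlast.le
    · simpa only [fin_three_add_two_add_two] using hmid
  · refine ⟨none, mem_doubleOrthant_one_of_forall_mul_pos (k := k + 2) (fun i => ?_) 0⟩
    rcases fin_three_eq_or_eq_add_one_or_eq_add_two k i with rfl | rfl | rfl
    exacts [hlast, hmid, mul_self_pos.mpr hlast_ne]

theorem dotProduct_ne_zero_of_mem_octantClass {x y : Fin 3 → R} :
    ∀ {j : Option (Fin 3)}, x ∈ octantClass j → y ∈ octantClass j → x ⬝ᵥ y ≠ 0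
  | some _ => dotProduct_ne_zero_of_mem_doubleOrthant
  | none => dotProduct_ne_zero_of_mem_doubleOrthant

variable (R) in
theorem orthogonalityGraph_fin_three_colorable : (orthogonalityGraph (Fin 3) R).Colorable 4 := by
  choose! color hcolor using fun x : Fin 3 → R => exists_mem_octantClass (x := x)
  let C : (orthogonalityGraph (Fin 3) R).Coloring (Option (Fin 3)) :=
    .mk color fun {x y} ⟨hx, hy, hxy⟩ hsame =>
      dotProduct_ne_zero_of_mem_octantClass (hcolor x hx) (hsame ▸ hcolor y hy) hxy
  exact C.colorable

end Octants

section Embeddings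

variable {V : Type*} {G : SimpleGraph V}

theorem IsEmbedding.ne_zero {p : V → Fin 3 → ℝ} (hp : IsEmbedding G p) {u v : V} (huv : u ≠ v) :
    p u ≠ 0 := fun hu =>
  hp.2 u v huv (by rw [hu, map_zero, LinearMap.zero_apply])

theorem Embeddable.nonempty_hom_orthogonalityGraph (hG : Embeddable G) :
    Nonempty (G →g orthogonalityGraph (Fin 3) ℝ) := by
  obtain ⟨p, hp⟩ := hG
  exact ⟨p, fun {u v} huv => ⟨hp.ne_zero huv.ne, hp.ne_zero huv.ne', hp.1 u v huv⟩⟩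

end Embeddings

theorem ks_min_order_four_colorable_general {V : Type*} (G : SimpleGraph V) (hG : Embeddable G) :
    G.Colorable 4 := by
  obtain ⟨φ⟩ := hG.nonempty_hom_orthogonalityGraph
  exact (orthogonalityGraph_fin_three_colorable ℝ).of_hom φ

/-- Every Kochen-Specker graph of minimum order is properly 4-colorable. -/
theorem ks_min_order_four_colorable {V : Type} [Fintype V]
    (G : SimpleGraph V) (hKS : IsKSGraph G)
    (hmin : ∀ (W : Type) [Fintype W] (H : SimpleGraph W),
      IsKSGraph H → Fintype.card V ≤ Fintype.card W) :
    ∃ c : V → Fin 4, ∀ u v : V, G.Adj u v → c u ≠ c v := by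
  obtain ⟨C⟩ := ks_min_order_four_colorable_general G hKS.1
  exact ⟨C, fun _ _ => C.valid⟩
end

section
/- Let G be a finite simple graph, (S, w) a cross-product cover of G, and v₁v₂ an edge of G with v₁, v₂ ∈ S. Then G is embeddable if and only if there exists a function p : V(G) → ℝ³ satisfying all of: (1) p(v₁) = (1,0,0) and p(v₂) = (0,1,0); (2) p(u) × p(v) ≠ 0 for all distinct u, v ∈ V(G); (3) p(v) = p(w_v¹) × p(w_v²) for every v ∈ V(G) \ S, where w_v = {w_v¹, w_v²}; (4) the inner product of p(u) and p(v) is 0 for every edge uv of G. -/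
open Matrix

/-!
Scale all vectors of an embedding to length one, then rotate so that `v₁` and `v₂`
land on the first two axes. Now keep the vectors on `S` and recompute the others as cross products
along the cover. If `v ∉ S`, then `p v` and `p (w₁ v) × p (w₂ v)` are both orthogonal to the two
independent vectors `p (w₁ v)` and `p (w₂ v)`, hence proportional; so, by induction along the cover,
every recomputed vector is a nonzero multiple of the old one, and rescaling preserves embeddings.
-/

theorem wellFounded_of_transGen_antisymm {α : Type*} [Finite α] {r : α → α → Prop}
    (hirr : ∀ a, ¬ r a a)
    (hanti : ∀ a b, Relation.TransGen r a b → Relation.TransGen r b a → a = b) :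
    WellFounded r := by
  have : Std.Irrefl (Relation.TransGen r) := by
    refine ⟨fun a haa => ?_⟩
    obtain ⟨b, hab, hba⟩ := Relation.TransGen.head'_iff.1 haa
    obtain rfl : a = b := (Relation.reflTransGen_iff_eq_or_transGen.1 hba).elim id
      (hanti a b (.single hab))
    exact hirr a hab
  exact Subrelation.wf Relation.TransGen.single
    (Finite.wellFounded_of_trans_of_irrefl (Relation.TransGen r))

section VectorAlgebra

theorem exists_smul_eq_cross {F : Type*} [Field F] {a x y : Fin 3 → F} (ha : a ≠ 0)
    (hx : a ⬝ᵥ x = 0) (hy : a ⬝ᵥ y = 0) : ∃ m : F, m • a = x ⨯₃ y := by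
  have hcross : a ⨯₃ (x ⨯₃ y) = 0 := by
    rw [cross_cross_eq_smul_sub_smul', hy, dotProduct_comm, hx, zero_smul, zero_smul, sub_zero]
  by_contra! hne
  exact crossProduct_ne_zero_iff_linearIndependent.2 ((LinearIndependent.pair_iff' ha).2 hne) hcross

theorem mulVec_dotProduct_mulVec_of_mem_orthogonalGroup {n R : Type*} [Fintype n] [DecidableEq n]
    [CommRing R] {M : Matrix n n R} (hM : M ∈ orthogonalGroup n R) (x y : n → R) :
    M *ᵥ x ⬝ᵥ M *ᵥ y = x ⬝ᵥ y := by
  rw [dotProduct_mulVec, ← mulVec_transpose, mulVec_mulVec, (mem_orthogonalGroup_iff' n R).1 hM,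
    one_mulVec]

variable {R : Type*} [CommRing R] {a b : Fin 3 → R}

theorem of_cross_mem_orthogonalGroup (ha : a ⬝ᵥ a = 1) (hb : b ⬝ᵥ b = 1) (hab : a ⬝ᵥ b = 0) :
    of ![a, b, a ⨯₃ b] ∈ orthogonalGroup (Fin 3) R := by
  have hba : b ⬝ᵥ a = 0 := by rw [dotProduct_comm, hab]
  have hca : a ⨯₃ b ⬝ᵥ a = 0 := by rw [dotProduct_comm, dot_self_cross]
  have hcb : a ⨯₃ b ⬝ᵥ b = 0 := by rw [dotProduct_comm, dot_cross_self]
  have hcc : a ⨯₃ b ⬝ᵥ a ⨯₃ b = 1 := by simp [cross_dot_cross, ha, hb, hab]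
  rw [mem_orthogonalGroup_iff]
  ext i j
  change (![a, b, a ⨯₃ b] : Fin 3 → Fin 3 → R) i ⬝ᵥ (![a, b, a ⨯₃ b] : Fin 3 → Fin 3 → R) j = _
  fin_cases i <;> fin_cases j <;> simp [ha, hb, hab, hba, hca, hcb, hcc]

theorem exists_mem_orthogonalGroup_mulVec_eq (ha : a ⬝ᵥ a = 1) (hb : b ⬝ᵥ b = 1)
    (hab : a ⬝ᵥ b = 0) :
    ∃ M ∈ orthogonalGroup (Fin 3) R, M *ᵥ a = ![1, 0, 0] ∧ M *ᵥ b = ![0, 1, 0] := by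
  refine ⟨of ![a, b, a ⨯₃ b], of_cross_mem_orthogonalGroup ha hb hab, ?_, ?_⟩
  · simp [cons_mulVec, ha, dotProduct_comm b a, hab, dotProduct_comm (a ⨯₃ b) a]
  · simp [cons_mulVec, hb, hab, dotProduct_comm (a ⨯₃ b) b]

theorem exists_ne_zero_smul_dotProduct_self_eq_one {n : Type*} [Fintype n] {x : n → ℝ}
    (hx : x ≠ 0) : ∃ c : ℝ, c ≠ 0 ∧ (c • x) ⬝ᵥ (c • x) = 1 := by
  have hpos : 0 < x ⬝ᵥ x :=
    (Finset.sum_nonneg fun i _ => mul_self_nonneg (x i)).lt_of_ne'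
      (dotProduct_self_eq_zero.not.2 hx)
  refine ⟨(√(x ⬝ᵥ x))⁻¹, by positivity, ?_⟩
  rw [smul_dotProduct, dotProduct_smul, smul_smul, smul_eq_mul, ← mul_inv,
    Real.mul_self_sqrt hpos.le, inv_mul_cancel₀ hpos.ne']

end VectorAlgebra

namespace IsEmbedding

variable {V : Type*} {G : SimpleGraph V} {p : V → Fin 3 → ℝ}

theorem ne_zero_s9 [Nontrivial V] (hp : IsEmbedding G p) (v : V) : p v ≠ 0 := by
  obtain ⟨u, huv⟩ := exists_ne v
  intro hv
  exact hp.2 u v huv (by rw [hv, map_zero])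

theorem smul (hp : IsEmbedding G p) {c : V → ℝ} (hc : ∀ v, c v ≠ 0) :
    IsEmbedding G fun v => c v • p v := by
  refine ⟨fun u v huv => ?_, fun u v huv => ?_⟩
  · rw [smul_dotProduct, dotProduct_smul, hp.1 u v huv, smul_zero, smul_zero]
  · rw [map_smul, map_smul, LinearMap.smul_apply]
    exact smul_ne_zero (hc v) (smul_ne_zero (hc u) (hp.2 u v huv))

theorem mulVec (hp : IsEmbedding G p) {M : Matrix (Fin 3) (Fin 3) ℝ}
    (hM : M ∈ orthogonalGroup (Fin 3) ℝ) : IsEmbedding G fun v => M *ᵥ p v := by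
  have hdot := mulVec_dotProduct_mulVec_of_mem_orthogonalGroup hM
  refine ⟨fun u v huv => by rw [hdot, hp.1 u v huv], fun u v huv hcross => hp.2 u v huv ?_⟩
  rw [← dotProduct_self_eq_zero, cross_dot_cross] at hcross ⊢
  simpa only [hdot] using hcross

theorem exists_normalized [Nontrivial V] (hp : IsEmbedding G p) :
    ∃ q, IsEmbedding G q ∧ ∀ v, q v ⬝ᵥ q v = 1 := by
  choose c hc hunit using fun v => exists_ne_zero_smul_dotProduct_self_eq_one (hp.ne_zero_s9 v)
  exact ⟨fun v => c v • p v, hp.smul hc, hunit⟩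

theorem exists_axis_aligned (hp : IsEmbedding G p) {v₁ v₂ : V} (hadj : G.Adj v₁ v₂) :
    ∃ q, IsEmbedding G q ∧ q v₁ = ![1, 0, 0] ∧ q v₂ = ![0, 1, 0] := by
  have : Nontrivial V := ⟨v₁, v₂, hadj.ne⟩
  obtain ⟨q, hq, hunit⟩ := hp.exists_normalized
  obtain ⟨M, hM, h₁, h₂⟩ :=
    exists_mem_orthogonalGroup_mulVec_eq (hunit v₁) (hunit v₂) (hq.1 v₁ v₂ hadj)
  exact ⟨fun v => M *ᵥ q v, hq.mulVec hM, h₁, h₂⟩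

theorem exists_cross_eq_smul (hp : IsEmbedding G p) {v a b : V} (ha : G.Adj v a) (hb : G.Adj v b)
    (hab : a ≠ b) : ∃ m : ℝ, m ≠ 0 ∧ p a ⨯₃ p b = m • p v := by
  have : Nontrivial V := ⟨a, b, hab⟩
  obtain ⟨m, hm⟩ := exists_smul_eq_cross (hp.ne_zero_s9 v) (hp.1 v a ha) (hp.1 v b hb)
  refine ⟨m, ?_, hm.symm⟩
  rintro rfl
  exact hp.2 a b hab (by rw [← hm, zero_smul])

end IsEmbedding

/-- The dependency relation of a cross-product cover `(S, w)` with `w_v = {w₁ v, w₂ v}`: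
`CoverDep S w₁ w₂ u v` says that the vector of `v` is computed from that of `u`. The functions
`w₁` and `w₂` are total; their values on `S` are irrelevant. -/
def CoverDep {V : Type*} (S : Set V) (w₁ w₂ : V → V) (u v : V) : Prop :=
  v ∉ S ∧ (u = w₁ v ∨ u = w₂ v)

section Cover

variable {V : Type*} {S : Set V} {w₁ w₂ : V → V}

theorem exists_extension_of_wellFounded_coverDep {α : Type*}
    (hwf : WellFounded (CoverDep S w₁ w₂)) (f : V → α) (op : α → α → α) :
    ∃ q : V → α, (∀ v ∈ S, q v = f v) ∧ ∀ v ∉ S, q v = op (q (w₁ v)) (q (w₂ v)) := by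
  classical
  let step (v : V) (prev : ∀ u, CoverDep S w₁ w₂ u v → α) : α :=
    if hv : v ∈ S then f v else op (prev (w₁ v) ⟨hv, .inl rfl⟩) (prev (w₂ v) ⟨hv, .inr rfl⟩)
  refine ⟨hwf.fix step, fun v hv => ?_, fun v hv => ?_⟩
  · rw [hwf.fix_eq]
    exact dif_pos hv
  · rw [hwf.fix_eq]
    exact dif_neg hv

variable {G : SimpleGraph V}

theorem not_coverDep_self (hw₁ : ∀ v ∉ S, G.Adj v (w₁ v)) (hw₂ : ∀ v ∉ S, G.Adj v (w₂ v)) (v : V) :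
    ¬ CoverDep S w₁ w₂ v v := by
  rintro ⟨hv, h | h⟩
  · exact (hw₁ v hv).ne h
  · exact (hw₂ v hv).ne h

theorem IsEmbedding.exists_ne_zero_smul_of_cover {p q : V → Fin 3 → ℝ} (hp : IsEmbedding G p)
    (hw₁ : ∀ v ∉ S, G.Adj v (w₁ v)) (hw₂ : ∀ v ∉ S, G.Adj v (w₂ v))
    (hwne : ∀ v ∉ S, w₁ v ≠ w₂ v) (hwf : WellFounded (CoverDep S w₁ w₂))
    (hqS : ∀ v ∈ S, q v = p v) (hqw : ∀ v ∉ S, q v = q (w₁ v) ⨯₃ q (w₂ v)) (v : V) :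
    ∃ c : ℝ, c ≠ 0 ∧ q v = c • p v := by
  induction v using hwf.induction with
  | _ v ih =>
    by_cases hv : v ∈ S
    · exact ⟨1, one_ne_zero, by rw [hqS v hv, one_smul]⟩
    · obtain ⟨c₁, hc₁, h₁⟩ := ih (w₁ v) ⟨hv, .inl rfl⟩
      obtain ⟨c₂, hc₂, h₂⟩ := ih (w₂ v) ⟨hv, .inr rfl⟩
      obtain ⟨m, hm, hcross⟩ := hp.exists_cross_eq_smul (hw₁ v hv) (hw₂ v hv) (hwne v hv)
      refine ⟨c₂ * c₁ * m, mul_ne_zero (mul_ne_zero hc₂ hc₁) hm, ?_⟩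
      rw [hqw v hv, h₁, h₂, map_smul, map_smul, LinearMap.smul_apply, hcross, smul_smul, smul_smul]

theorem IsEmbedding.exists_cross_of_cover {p : V → Fin 3 → ℝ} (hp : IsEmbedding G p)
    (hw₁ : ∀ v ∉ S, G.Adj v (w₁ v)) (hw₂ : ∀ v ∉ S, G.Adj v (w₂ v))
    (hwne : ∀ v ∉ S, w₁ v ≠ w₂ v) (hwf : WellFounded (CoverDep S w₁ w₂)) :
    ∃ q, IsEmbedding G q ∧ (∀ v ∈ S, q v = p v) ∧ ∀ v ∉ S, q v = q (w₁ v) ⨯₃ q (w₂ v) := by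
  obtain ⟨q, hqS, hqw⟩ := exists_extension_of_wellFounded_coverDep hwf p fun x y => x ⨯₃ y
  choose c hc hqc using hp.exists_ne_zero_smul_of_cover hw₁ hw₂ hwne hwf hqS hqw
  obtain rfl : q = fun v => c v • p v := funext hqc
  exact ⟨_, hp.smul hc, hqS, hqw⟩

end Cover

theorem embeddable_iff_cross_product_cover_general {V : Type*}
    (G : SimpleGraph V) (S : Set V) (w₁ w₂ : V → V)
    (hw₁ : ∀ v ∉ S, G.Adj v (w₁ v)) (hw₂ : ∀ v ∉ S, G.Adj v (w₂ v))
    (hwne : ∀ v ∉ S, w₁ v ≠ w₂ v) (hwf : WellFounded (CoverDep S w₁ w₂))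
    (v₁ v₂ : V) (hadj : G.Adj v₁ v₂) (hv₁ : v₁ ∈ S) (hv₂ : v₂ ∈ S) :
    Embeddable G ↔
      ∃ p : V → Fin 3 → ℝ,
        (p v₁ = ![1, 0, 0] ∧ p v₂ = ![0, 1, 0]) ∧
        (∀ u v : V, u ≠ v → crossProduct (p u) (p v) ≠ 0) ∧
        (∀ v ∉ S, p v = crossProduct (p (w₁ v)) (p (w₂ v))) ∧
        (∀ u v : V, G.Adj u v → p u ⬝ᵥ p v = 0) := by
  constructor
  · rintro ⟨p₀, hp₀⟩
    obtain ⟨p, hp, h₁, h₂⟩ := hp₀.exists_axis_aligned hadj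
    obtain ⟨q, hq, hqS, hqw⟩ := hp.exists_cross_of_cover hw₁ hw₂ hwne hwf
    exact ⟨q, ⟨(hqS v₁ hv₁).trans h₁, (hqS v₂ hv₂).trans h₂⟩, hq.2, hqw, hq.1⟩
  · rintro ⟨p, -, hcross, -, hdot⟩
    exact ⟨p, hdot, hcross⟩

/-- Observation 1: given a cross-product cover `(S, w)` of `G` (here the pair
`w_v = {w₁ v, w₂ v}` consists of two distinct neighbors of `v`, and the
transitive closure of the dependency relation is antisymmetric) and an edge
`v₁v₂` between free vertices, `G` is embeddable iff there is `p : V → ℝ³`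
with (1) `p v₁ = (1,0,0)`, `p v₂ = (0,1,0)`; (2) no two distinct vertices get
collinear vectors; (3) each bound vertex gets the cross product of the
vectors of its two cover neighbors; (4) adjacent vertices get orthogonal
vectors. -/
theorem embeddable_iff_cross_product_cover {V : Type*} [Fintype V]
    (G : SimpleGraph V) (S : Set V) (w₁ w₂ : V → V)
    (hw₁ : ∀ v ∉ S, G.Adj v (w₁ v)) (hw₂ : ∀ v ∉ S, G.Adj v (w₂ v))
    (hwne : ∀ v ∉ S, w₁ v ≠ w₂ v)
    (hanti : ∀ a b : V,
      Relation.TransGen (fun u v => v ∉ S ∧ (u = w₁ v ∨ u = w₂ v)) a b →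
      Relation.TransGen (fun u v => v ∉ S ∧ (u = w₁ v ∨ u = w₂ v)) b a →
      a = b)
    (v₁ v₂ : V) (hadj : G.Adj v₁ v₂) (hv₁ : v₁ ∈ S) (hv₂ : v₂ ∈ S) :
    Embeddable G ↔
      ∃ p : V → Fin 3 → ℝ,
        (p v₁ = ![1, 0, 0] ∧ p v₂ = ![0, 1, 0]) ∧
        (∀ u v : V, u ≠ v → crossProduct (p u) (p v) ≠ 0) ∧
        (∀ v ∉ S, p v = crossProduct (p (w₁ v)) (p (w₂ v))) ∧
        (∀ u v : V, G.Adj u v → p u ⬝ᵥ p v = 0) := by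
  exact embeddable_iff_cross_product_cover_general G S w₁ w₂ hw₁ hw₂ hwne
    (wellFounded_of_transGen_antisymm (not_coverDep_self hw₁ hw₂) hanti) v₁ v₂ hadj hv₁ hv₂
end

section
/- There exists a Kochen-Specker graph with exactly 31 vertices; that is, there is a finite simple graph on 31 vertices that is embeddable and not 010-colorable. -/
open Matrix

/-!
The graph is the orthogonality graph of the 31 rays of Conway and Kochen. The engine of the proof is
a forcing rule: in an orthogonal triad two of whose members are orthogonal to zeros of a coloring,
the third member is again a zero. The coordinate axes form such a triad, so one of them is a zero.

If it is `e₃`, then the two triads `e₁, (0, 1, ±1)` and `e₂, (1, 0, ±1)` each have a zero off the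
axes, and the quarter turns about `e₃` allow us to assume that these are `(0, 1, 1)` and
`(1, 0, 1)`; three forcing steps then produce orthogonal zeros. If it is `e₁`, forcing shows that
neither `(1, -2, 0)` nor `(1, 1, 0)` is a zero, so that both `(2, 1, 0)` and `(-1, 1, 0)` are; these
are the images under a quarter turn of `(1, -2, 0)` and `(1, 1, 0)`, which cannot be zeros together.
The case of `e₂` is that of `e₁` after a quarter turn.
-/

theorem embeddable_of_injective_ringHom {V R : Type*} [CommRing R] {f : R →+* ℝ}
    (hf : Function.Injective f) {G : SimpleGraph V} {p : V → Fin 3 → R}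
    (horth : ∀ u v, G.Adj u v → p u ⬝ᵥ p v = 0)
    (hcross : Pairwise fun u v => crossProduct (p u) (p v) ≠ 0) : Embeddable G := by
  refine ⟨fun v => f ∘ p v, fun u v huv => ?_, fun u v huv hzero => hcross huv ?_⟩
  · rw [← RingHom.map_dotProduct, horth u v huv, map_zero]
  · have hmap : f ∘ crossProduct (p u) (p v) = crossProduct (f ∘ p u) (f ∘ p v) := by
      ext i
      fin_cases i <;> simp [cross_apply]
    exact funext fun i => (map_eq_zero_iff f hf).mp (congrFun (hmap.trans hzero) i)

theorem Is010Coloring.comp_hom {V W : Type*} {G : SimpleGraph V} {H : SimpleGraph W}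
    {c : W → Fin 2} (hc : Is010Coloring H c) (f : G →g H) : Is010Coloring G (c ∘ f) :=
  ⟨fun _ _ huv => hc.1 _ _ (f.map_adj huv),
    fun _ _ _ huv hvw huw => hc.2 _ _ _ (f.map_adj huv) (f.map_adj hvw) (f.map_adj huw)⟩

namespace Is010Coloring

variable {V : Type*} {G : SimpleGraph V} {c : V → Fin 2} {a b u v w : V}

theorem ne_zero_of_adj (hc : Is010Coloring G c) (ha : c a = 0)
    (hau : G.Adj a u := by decide) : c u ≠ 0 :=
  fun hu => hc.1 a u hau ⟨ha, hu⟩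

theorem eq_zero_of_triangle (hc : Is010Coloring G c) (hu : c u ≠ 0) (hv : c v ≠ 0)
    (huv : G.Adj u v := by decide) (hvw : G.Adj v w := by decide)
    (huw : G.Adj u w := by decide) : c w = 0 := by
  by_contra hw
  exact hc.2 u v w huv hvw huw
    ⟨Fin.eq_one_of_ne_zero _ hu, Fin.eq_one_of_ne_zero _ hv, Fin.eq_one_of_ne_zero _ hw⟩

theorem eq_zero_of_adj_triangle (hc : Is010Coloring G c) (ha : c a = 0) (hb : c b = 0) (u v : V)
    (hau : G.Adj a u := by decide) (hbv : G.Adj b v := by decide)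
    (huv : G.Adj u v := by decide) (hvw : G.Adj v w := by decide)
    (huw : G.Adj u w := by decide) : c w = 0 :=
  hc.eq_zero_of_triangle (hc.ne_zero_of_adj ha hau) (hc.ne_zero_of_adj hb hbv) huv hvw huw

end Is010Coloring

/-- The vectors of the Conway–Kochen configuration, each ray being represented by two opposite
vectors. The primitive integer vectors of square norm at most `6` span 37 rays; the inequality
removes the six rays `(1, 2, z)` and `(2, -1, z)` with `z = 0, ±1`, in a way which is invariant
under quarter turns about the third axis. -/
def conwayKochenVectors : Set (Fin 3 → ℤ) :=
  {v | v ⬝ᵥ v ∈ ({1, 2, 3, 5, 6} : Finset ℤ) ∧ 0 ≤ v 0 * v 1 * (v 0 ^ 2 - v 1 ^ 2)}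

instance : DecidablePred (· ∈ conwayKochenVectors) := fun v =>
  inferInstanceAs
    (Decidable (v ⬝ᵥ v ∈ ({1, 2, 3, 5, 6} : Finset ℤ) ∧ 0 ≤ v 0 * v 1 * (v 0 ^ 2 - v 1 ^ 2)))

@[simp]
theorem neg_mem_conwayKochenVectors {v : Fin 3 → ℤ} :
    -v ∈ conwayKochenVectors ↔ v ∈ conwayKochenVectors := by
  simp [conwayKochenVectors]

/-- The orthogonality graph of the Conway–Kochen vectors, on all of `ℤ³` so that its vertices can be
written as plain vectors: the integer vectors outside the configuration are isolated. -/
def conwayKochenGraph : SimpleGraph (Fin 3 → ℤ) where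
  Adj u v := u ∈ conwayKochenVectors ∧ v ∈ conwayKochenVectors ∧ u ⬝ᵥ v = 0
  symm := ⟨fun u v h => ⟨h.2.1, h.1, dotProduct_comm u v ▸ h.2.2⟩⟩
  loopless := ⟨fun v h => by simpa [h.2.2] using h.1.1⟩

instance : DecidableRel conwayKochenGraph.Adj := fun u v =>
  inferInstanceAs
    (Decidable (u ∈ conwayKochenVectors ∧ v ∈ conwayKochenVectors ∧ u ⬝ᵥ v = 0))

theorem conwayKochenGraph_adj_neg_left {u v : Fin 3 → ℤ} :
    conwayKochenGraph.Adj (-u) v ↔ conwayKochenGraph.Adj u v := by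
  simp [conwayKochenGraph]

theorem conwayKochenGraph_adj_neg_right {u v : Fin 3 → ℤ} :
    conwayKochenGraph.Adj u (-v) ↔ conwayKochenGraph.Adj u v := by
  rw [SimpleGraph.adj_comm, conwayKochenGraph_adj_neg_left, SimpleGraph.adj_comm]

/-- The quarter turn about the third axis, as a symmetry of the Conway–Kochen graph. -/
def quarterTurn : conwayKochenGraph →g conwayKochenGraph where
  toFun v := ![-v 1, v 0, v 2]
  map_rel' := by
    have hmem : ∀ v ∈ conwayKochenVectors, ![-v 1, v 0, v 2] ∈ conwayKochenVectors := by
      rintro v ⟨hnorm, hsign⟩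
      refine ⟨?_, ?_⟩
      · simpa [dotProduct, Fin.sum_univ_three, add_comm] using hnorm
      · calc (0 : ℤ) ≤ v 0 * v 1 * (v 0 ^ 2 - v 1 ^ 2) := hsign
          _ = -v 1 * v 0 * ((-v 1) ^ 2 - v 0 ^ 2) := by ring
    rintro u v ⟨hu, hv, huv⟩
    refine ⟨hmem u hu, hmem v hv, ?_⟩
    simpa [dotProduct, Fin.sum_univ_three, add_comm] using huv

namespace conwayKochenGraph

variable {c : (Fin 3 → ℤ) → Fin 2}

-- The vectors in lemma names are written as strings of coordinates, with `m` for a minus sign.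

theorem ne_zero_101_of_001_011 (hc : Is010Coloring conwayKochenGraph c)
    (h001 : c ![0, 0, 1] = 0) (h011 : c ![0, 1, 1] = 0) : c ![1, 0, 1] ≠ 0 := by
  intro h101
  have h211 : c ![2, 1, 1] = 0 := hc.eq_zero_of_adj_triangle h011 h101 ![0, 1, -1] ![1, -1, -1]
  have h201 : c ![2, 0, 1] = 0 := hc.eq_zero_of_adj_triangle h001 h211 ![0, 1, 0] ![1, 0, -2]
  have h1m1m2 : c ![1, -1, -2] = 0 := hc.eq_zero_of_adj_triangle h001 h011 ![1, 1, 0] ![1, -1, 1]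
  exact hc.ne_zero_of_adj h201 (by decide) h1m1m2

theorem ne_zero_001 (hc : Is010Coloring conwayKochenGraph c) : c ![0, 0, 1] ≠ 0 := by
  intro h001
  -- The quarter turn cyclically permutes the pairs formed by one of `(0, ±1, 1)` and one of
  -- `(±1, 0, 1)`, so excluding one pair excludes all four.
  have hc₁ := hc.comp_hom quarterTurn
  have hc₂ := hc₁.comp_hom quarterTurn
  have hc₃ := hc₂.comp_hom quarterTurn
  have h100 : c ![1, 0, 0] ≠ 0 := hc.ne_zero_of_adj h001
  have h010 : c ![0, 1, 0] ≠ 0 := hc.ne_zero_of_adj h001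
  by_cases h011 : c ![0, 1, 1] = 0
  · have hm101 : c ![-1, 0, 1] = 0 :=
      hc.eq_zero_of_triangle h010 (ne_zero_101_of_001_011 hc h001 h011)
    exact ne_zero_101_of_001_011 hc₁ h001 hm101 h011
  · have h0m11 : c ![0, -1, 1] = 0 := hc.eq_zero_of_triangle h100 h011
    have hm101 : c ![-1, 0, 1] ≠ 0 := ne_zero_101_of_001_011 hc₂ h001 h0m11
    have h101 : c ![1, 0, 1] = 0 := hc.eq_zero_of_triangle h010 hm101
    exact ne_zero_101_of_001_011 hc₃ h001 h101 h0m11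

theorem ne_zero_110_of_1m20 (hc : Is010Coloring conwayKochenGraph c)
    (h1m20 : c ![1, -2, 0] = 0) : c ![1, 1, 0] ≠ 0 := by
  intro h110
  have h01m1 : c ![0, 1, -1] = 0 :=
    hc.eq_zero_of_adj_triangle h110 h1m20 ![1, -1, -1] ![2, 1, 1]
  have h1m11 : c ![1, -1, 1] = 0 :=
    hc.eq_zero_of_adj_triangle h01m1 h1m20 ![0, 1, 1] ![2, 1, -1]
  exact hc.ne_zero_of_adj h110 (by decide) h1m11

theorem ne_zero_1m20_of_100 (hc : Is010Coloring conwayKochenGraph c)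
    (h100 : c ![1, 0, 0] = 0) : c ![1, -2, 0] ≠ 0 := by
  intro h1m20
  have h1m1m1 : c ![1, -1, -1] = 0 :=
    hc.eq_zero_of_adj_triangle h100 h1m20 ![0, 1, -1] ![2, 1, 1]
  have h1m11 : c ![1, -1, 1] = 0 :=
    hc.eq_zero_of_adj_triangle h100 h1m20 ![0, 1, 1] ![2, 1, -1]
  have h10m1 : c ![1, 0, -1] = 0 :=
    hc.eq_zero_of_adj_triangle h100 h1m1m1 ![0, 1, 0] ![1, 0, 1]
  exact hc.ne_zero_of_adj h1m11 (by decide) h10m1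

theorem ne_zero_110_of_100 (hc : Is010Coloring conwayKochenGraph c)
    (h100 : c ![1, 0, 0] = 0) : c ![1, 1, 0] ≠ 0 := by
  intro h110
  have h21m1 : c ![2, 1, -1] = 0 :=
    hc.eq_zero_of_adj_triangle h100 h110 ![0, 1, 1] ![1, -1, 1]
  have h211 : c ![2, 1, 1] = 0 :=
    hc.eq_zero_of_adj_triangle h100 h110 ![0, 1, -1] ![1, -1, -1]
  have h20m1 : c ![2, 0, -1] = 0 :=
    hc.eq_zero_of_adj_triangle h100 h21m1 ![0, 1, 0] ![1, 0, 2]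
  have h201 : c ![2, 0, 1] = 0 :=
    hc.eq_zero_of_adj_triangle h100 h211 ![0, 1, 0] ![1, 0, -2]
  have h111 : c ![1, 1, 1] = 0 :=
    hc.eq_zero_of_adj_triangle h110 h201 ![1, -1, 0] ![1, 1, -2]
  have h11m1 : c ![1, 1, -1] = 0 :=
    hc.eq_zero_of_adj_triangle h110 h20m1 ![1, -1, 0] ![1, 1, 2]
  have h101 : c ![1, 0, 1] = 0 :=
    hc.eq_zero_of_adj_triangle h100 h111 ![0, 1, 0] ![1, 0, -1]
  exact hc.ne_zero_of_adj h11m1 (by decide) h101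

theorem ne_zero_100 (hc : Is010Coloring conwayKochenGraph c) : c ![1, 0, 0] ≠ 0 := by
  intro h100
  have h001 : c ![0, 0, 1] ≠ 0 := hc.ne_zero_of_adj h100
  have h210 : c ![2, 1, 0] = 0 := hc.eq_zero_of_triangle h001 (ne_zero_1m20_of_100 hc h100)
  have hm110 : c ![-1, 1, 0] = 0 := hc.eq_zero_of_triangle h001 (ne_zero_110_of_100 hc h100)
  exact ne_zero_110_of_1m20 (hc.comp_hom quarterTurn) h210 hm110

end conwayKochenGraph

theorem not_is010Colorable_conwayKochenGraph : ¬ Is010Colorable conwayKochenGraph := by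
  rintro ⟨c, hc⟩
  have h100 : c ![1, 0, 0] ≠ 0 := conwayKochenGraph.ne_zero_100 hc
  have h010 : c ![0, 1, 0] ≠ 0 := conwayKochenGraph.ne_zero_100 (hc.comp_hom quarterTurn)
  exact conwayKochenGraph.ne_zero_001 hc (hc.eq_zero_of_triangle h100 h010)

/-- One vector on each of the 31 rays of the Conway–Kochen configuration, listed by increasing
norm. -/
def conwayKochenRay : Fin 31 → Fin 3 → ℤ :=
  ![![1, 0, 0], ![0, 1, 0], ![0, 0, 1],
    ![0, 1, 1], ![0, 1, -1], ![1, 0, 1], ![1, 0, -1], ![1, 1, 0], ![1, -1, 0],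
    ![1, 1, 1], ![1, 1, -1], ![1, -1, 1], ![1, -1, -1],
    ![0, 1, 2], ![0, 1, -2], ![0, 2, 1], ![0, 2, -1], ![1, 0, 2], ![1, 0, -2],
    ![2, 0, 1], ![2, 0, -1], ![1, -2, 0], ![2, 1, 0],
    ![1, 1, 2], ![1, 1, -2], ![1, -1, 2], ![1, -1, -2],
    ![1, -2, 1], ![1, -2, -1], ![2, 1, 1], ![2, 1, -1]]

theorem pairwise_crossProduct_conwayKochenRay_ne_zero :
    Pairwise fun i j => crossProduct (conwayKochenRay i) (conwayKochenRay j) ≠ 0 := by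
  unfold Pairwise
  decide +kernel

theorem mem_piFinset_Icc_of_mem_conwayKochenVectors {v : Fin 3 → ℤ}
    (hv : v ∈ conwayKochenVectors) :
    v ∈ Fintype.piFinset fun _ : Fin 3 => Finset.Icc (-2 : ℤ) 2 := by
  have hnorm : v ⬝ᵥ v ≤ 6 := by
    have hle : ∀ n ∈ ({1, 2, 3, 5, 6} : Finset ℤ), n ≤ 6 := by decide
    exact hle _ hv.1
  refine Fintype.mem_piFinset.mpr fun i => Finset.mem_Icc.mpr ?_
  have hcoord : v i * v i ≤ v ⬝ᵥ v :=
    Finset.single_le_sum (f := fun j => v j * v j) (fun j _ => mul_self_nonneg (v j))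
      (Finset.mem_univ i)
  constructor <;> nlinarith

theorem exists_conwayKochenRay_eq_or_eq_neg (v : Fin 3 → ℤ) (hv : v ∈ conwayKochenVectors) :
    ∃ i, conwayKochenRay i = v ∨ conwayKochenRay i = -v := by
  have hbox : ∀ w ∈ Fintype.piFinset fun _ : Fin 3 => Finset.Icc (-2 : ℤ) 2,
      w ∈ conwayKochenVectors → ∃ i, conwayKochenRay i = w ∨ conwayKochenRay i = -w := by
    decide +kernel
  exact hbox v (mem_piFinset_Icc_of_mem_conwayKochenVectors hv) hv

/-- The orthogonality graph of the 31 Conway–Kochen rays. -/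
def conwayKochenRayGraph : SimpleGraph (Fin 31) :=
  conwayKochenGraph.comap conwayKochenRay

theorem embeddable_conwayKochenRayGraph : Embeddable conwayKochenRayGraph :=
  embeddable_of_injective_ringHom (Int.castRingHom ℝ).injective_int (fun _ _ huv => huv.2.2)
    pairwise_crossProduct_conwayKochenRay_ne_zero

theorem nonempty_hom_conwayKochenRayGraph :
    Nonempty (conwayKochenGraph →g conwayKochenRayGraph) := by
  choose! rayIndex hindex using exists_conwayKochenRay_eq_or_eq_neg
  refine ⟨⟨rayIndex, fun {u v} huv => ?_⟩⟩
  change conwayKochenGraph.Adj (conwayKochenRay (rayIndex u)) (conwayKochenRay (rayIndex v))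
  rcases hindex u huv.1 with hu | hu <;> rcases hindex v huv.2.1 with hv | hv <;>
    simpa only [hu, hv, conwayKochenGraph_adj_neg_left, conwayKochenGraph_adj_neg_right] using huv

theorem not_is010Colorable_conwayKochenRayGraph : ¬ Is010Colorable conwayKochenRayGraph := by
  rintro ⟨c, hc⟩
  obtain ⟨rayIndex⟩ := nonempty_hom_conwayKochenRayGraph
  exact not_is010Colorable_conwayKochenGraph ⟨c ∘ rayIndex, hc.comp_hom rayIndex⟩

/-- There exists a Kochen-Specker graph with exactly 31 vertices: a simple
graph on 31 vertices that is embeddable and not 010-colorable. -/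
theorem exists_ks_graph_31 :
    ∃ G : SimpleGraph (Fin 31), Embeddable G ∧ ¬ Is010Colorable G :=
  ⟨conwayKochenRayGraph, embeddable_conwayKochenRayGraph, not_is010Colorable_conwayKochenRayGraph⟩
end

section
/- There exists a Kochen-Specker candidate with exactly 17 vertices: a finite simple graph on 17 vertices that is not 010-colorable, has no cycle of length 4, is properly 4-colorable, has minimum degree at least 3, and in which every vertex lies on a triangle. -/
open Matrix

/-!
Subdivide every edge of `K₄` and replace each of the ten resulting vertices by a triangle: a branch
triangle consists of the three flags (incident vertex-edge pairs) at a vertex of `K₄`, and the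
triangle of an edge consists of its two flags and an apex. Each triangle of a 010-colored graph has
exactly one vertex colored 0, so comparing the four branch triangles with the six edge triangles
shows that exactly two edges have an apex colored 0.

Give opposite edges of `K₄` a common apex for two of the three pairs of opposite edges (vertices 12
and 13), and let the two apexes of the third pair (14 and 15) form a triangle with vertex 16. By
parity 14 and 15 get the same color, hence both are 1 and 16 is 0. So exactly one of 12 and 13 is 0,
and joining both of them to 16 rules out every 010-coloring.
-/

namespace Is010Coloring

variable {V : Type*} {G : SimpleGraph V} {c : V → Fin 2}

lemma one_le_val_add_val (hc : Is010Coloring G c) {u v : V} (huv : G.Adj u v) :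
    1 ≤ (c u : ℕ) + c v := by
  have := hc.1 u v huv
  lia

lemma val_add_val_add_val_eq_two (hc : Is010Coloring G c) {u v w : V}
    (huv : G.Adj u v) (hvw : G.Adj v w) (huw : G.Adj u w) :
    (c u : ℕ) + c v + c w = 2 := by
  have := hc.one_le_val_add_val huv
  have := hc.one_le_val_add_val hvw
  have := hc.one_le_val_add_val huw
  have := hc.2 u v w huv hvw huw
  lia

/-- Think of `ι × Fin 3` as the flags of a cubic multigraph on `ι`, with `σ d` the other flag of the
edge of `d`, and of `a d` as the apex of that edge. -/
lemma sum_val_apex_eq (hc : Is010Coloring G c) {ι : Type*} [Fintype ι]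
    (σ : Equiv.Perm (ι × Fin 3)) (f a : ι × Fin 3 → V)
    (hbranch : ∀ i, Pairwise fun m n ↦ G.Adj (f (i, m)) (f (i, n)))
    (hedge : ∀ d, G.Adj (f d) (f (σ d)) ∧ G.Adj (f (σ d)) (a d) ∧ G.Adj (f d) (a d)) :
    ∑ d, (c (a d) : ℕ) = 2 * Fintype.card ι := by
  have flags : ∑ d, (c (f d) : ℕ) = Fintype.card ι * 2 := by
    have branch (i : ι) : ∑ m, (c (f (i, m)) : ℕ) = 2 := by
      rw [Fin.sum_univ_three]
      exact hc.val_add_val_add_val_eq_two (hbranch i (by decide)) (hbranch i (by decide))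
        (hbranch i (by decide))
    simp [Fintype.sum_prod_type, branch]
  have flags_perm : ∑ d, (c (f (σ d)) : ℕ) = ∑ d, (c (f d) : ℕ) :=
    Equiv.sum_comp σ fun d ↦ (c (f d) : ℕ)
  have edges : ∑ d, ((c (f d) : ℕ) + c (f (σ d)) + c (a d)) = Fintype.card ι * 3 * 2 := by
    simp [fun d ↦ hc.val_add_val_add_val_eq_two (hedge d).1 (hedge d).2.1 (hedge d).2.2]
  simp only [Finset.sum_add_distrib] at edges
  lia

end Is010Coloring

/-- The maximal cliques of the 17-vertex candidate: the branch triangles of `K₄`, its edge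
triangles, and the gadget joining the apexes. Vertex `3 * i + m` is the flag of the `m`-th edge at
the vertex `i` of `K₄`; the apexes are 12, 13, 14 and 15. -/
def ksCliques : Finset (Finset (Fin 17)) :=
  {{0, 1, 2}, {3, 4, 5}, {6, 7, 8}, {9, 10, 11},
    {0, 3, 12}, {6, 9, 12}, {1, 7, 13}, {4, 10, 13}, {2, 11, 14}, {5, 8, 15},
    {14, 15, 16}, {12, 16}, {13, 16}}

/-- The 17-vertex candidate: two distinct vertices are adjacent when some member of `ksCliques`
contains both. -/
def ksGraph : SimpleGraph (Fin 17) :=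
  SimpleGraph.fromRel fun u v ↦ ∃ s ∈ ksCliques, u ∈ s ∧ v ∈ s

namespace ksGraph

instance : DecidableRel ksGraph.Adj :=
  inferInstanceAs (DecidableRel (SimpleGraph.fromRel _).Adj)

/-- The vertex of `ksGraph` standing for the flag of `K₄` formed by its vertex `i` and the `m`-th
edge at `i`. -/
def flag : Fin 4 × Fin 3 → Fin 17 := fun d ↦
  ![![0, 1, 2], ![3, 4, 5], ![6, 7, 8], ![9, 10, 11]] d.1 d.2

/-- The apex of the triangle of the `m`-th edge at the vertex `i` of `K₄`. -/
def apex : Fin 4 × Fin 3 → Fin 17 := fun d ↦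
  ![![12, 13, 14], ![12, 13, 15], ![12, 13, 15], ![12, 13, 14]] d.1 d.2

/-- The permutation of the flags of `K₄` exchanging the two flags of each edge: the `m`-th
edges form the `m`-th of the three perfect matchings of `K₄`. -/
def oppositeFlag : Equiv.Perm (Fin 4 × Fin 3) :=
  Function.Involutive.toPerm
    (fun d ↦ (![![1, 0, 3, 2], ![2, 3, 0, 1], ![3, 2, 1, 0]] d.2 d.1, d.2))
    fun d ↦ by decide +revert

lemma adj_flag (i : Fin 4) : Pairwise fun m n ↦ ksGraph.Adj (flag (i, m)) (flag (i, n)) :=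
  fun m n hmn ↦ by decide +revert

lemma edge_triangle (d : Fin 4 × Fin 3) :
    ksGraph.Adj (flag d) (flag (oppositeFlag d)) ∧
      ksGraph.Adj (flag (oppositeFlag d)) (apex d) ∧ ksGraph.Adj (flag d) (apex d) := by
  decide +revert

theorem not_is010Colorable : ¬ Is010Colorable ksGraph := by
  rintro ⟨c, hc⟩
  have apexes : 4 * (c 12 : ℕ) + 4 * c 13 + 2 * c 14 + 2 * c 15 = 8 := by
    have := hc.sum_val_apex_eq oppositeFlag flag apex adj_flag edge_triangle
    simp only [Fintype.sum_prod_type, Fin.sum_univ_four, Fin.sum_univ_three, apex, Matrix.cons_val,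
      Fintype.card_fin] at this
    lia
  have triangle : (c 14 : ℕ) + c 15 + c 16 = 2 :=
    hc.val_add_val_add_val_eq_two (by decide) (by decide) (by decide)
  have val_16 : (c 16 : ℕ) = 0 := by lia
  have one_le_12 : 1 ≤ (c 12 : ℕ) := by
    simpa [val_16] using hc.one_le_val_add_val (show ksGraph.Adj 12 16 by decide)
  have one_le_13 : 1 ≤ (c 13 : ℕ) := by
    simpa [val_16] using hc.one_le_val_add_val (show ksGraph.Adj 13 16 by decide)
  lia

lemma subsingleton_commonNeighbors {u v : Fin 17} (huv : u ≠ v) :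
    (ksGraph.commonNeighbors u v).Subsingleton := by
  have card_le_one : (ksGraph.neighborFinset u ∩ ksGraph.neighborFinset v).card ≤ 1 := by
    decide +revert
  intro a ha b hb
  exact Finset.card_le_one.1 card_le_one a (by simpa [SimpleGraph.mem_commonNeighbors] using ha)
    b (by simpa [SimpleGraph.mem_commonNeighbors] using hb)

/-- A proper coloring of the candidate with four colors. -/
def coloring : ksGraph.Coloring (Fin 4) :=
  SimpleGraph.Coloring.mk ![0, 1, 2, 1, 0, 2, 0, 2, 1, 1, 2, 0, 2, 3, 1, 3, 0] (by decide)

lemma three_le_degree (v : Fin 17) : 3 ≤ ksGraph.degree v := by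
  decide +revert

lemma exists_triangle (v : Fin 17) :
    ∃ u w, ksGraph.Adj v u ∧ ksGraph.Adj v w ∧ ksGraph.Adj u w := by
  decide +kernel +revert

end ksGraph

/-- There exists a Kochen-Specker candidate with exactly 17 vertices: a
simple graph on 17 vertices that is not 010-colorable, has no 4-cycle, is
properly 4-colorable, has minimum degree at least 3 (every vertex has three
pairwise distinct neighbors), and in which every vertex lies on a triangle. -/
theorem exists_ks_candidate_17 :
    ∃ G : SimpleGraph (Fin 17),
      ¬ Is010Colorable G ∧
      (¬ ∃ a b c d : Fin 17, a ≠ c ∧ b ≠ d ∧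
        G.Adj a b ∧ G.Adj b c ∧ G.Adj c d ∧ G.Adj d a) ∧
      (∃ c : Fin 17 → Fin 4, ∀ u v : Fin 17, G.Adj u v → c u ≠ c v) ∧
      (∀ v : Fin 17, ∃ a b c : Fin 17, a ≠ b ∧ a ≠ c ∧ b ≠ c ∧
        G.Adj v a ∧ G.Adj v b ∧ G.Adj v c) ∧
      (∀ v : Fin 17, ∃ u w : Fin 17, G.Adj v u ∧ G.Adj v w ∧ G.Adj u w) := by
  refine ⟨ksGraph, ksGraph.not_is010Colorable, ?_, ?_, fun v ↦ ?_, ksGraph.exists_triangle⟩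
  · rintro ⟨a, b, c, d, hac, hbd, hab, hbc, hcd, hda⟩
    exact hbd (ksGraph.subsingleton_commonNeighbors hac ⟨hab, hbc.symm⟩ ⟨hda.symm, hcd⟩)
  · exact ⟨ksGraph.coloring, fun _ _ huv ↦ ksGraph.coloring.valid huv⟩
  · obtain ⟨a, ha, b, hb, c, hc, hab, hac, hbc⟩ :=
      Finset.two_lt_card.1 (ksGraph.three_le_degree v)
    simp only [SimpleGraph.mem_neighborFinset] at ha hb hc
    exact ⟨a, b, c, hab, hac, hbc, ha, hb, hc⟩
end
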